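/- There exists a function F : [0,∞) → ℝ which is nondecreasing and continuous, with F(0) = 0 and F(x) → 1 as x → ∞, satisfying the functional equations 2F(x) = F(x−1) + 1 for all x ≥ 1 and 2F(x) = F(x/(1−x)) for all 0 < x < 1, and such that for every n ≥ 1 and every x ≥ 0, |F(x) − F_n(x)| ≤ 2^(−n); in particular F_n converges uniformly to F. -/

import Mathlib

open Filter

/-- The generations of the Calkin–Wilf tree: `CW 0 = [1/1]` is the first
generation, and each generation is obtained from the previous one by replacing
each entry `x` by `x/(x+1)` and `x+1`, in this order.  Thus the `n`-th
generation of the paper is `CW (n-1)`. -/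
def CW : ℕ → List ℚ
  | 0 => [1]
  | n + 1 => (CW n).flatMap (fun x => [x / (x + 1), x + 1])

open scoped Classical in
/-- `Fcw n` is the distribution function of the `(n+1)`-st generation of the
Calkin–Wilf tree: `Fcw (n-1) x = F_n(x) = 2^(1-n) · #{j : x_j^(n) ≤ x}`. -/
noncomputable def Fcw (n : ℕ) (x : ℝ) : ℝ :=
  ((CW n).countP (fun q => decide ((q : ℝ) ≤ x))) / 2 ^ n


lemma CW_pos (n : ℕ) : ∀ q ∈ CW n, 0 < q := by
  induction n with
  | zero => simp [CW]
  | succ n ih =>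
    intro q hq
    simp only [CW, List.mem_flatMap] at hq
    obtain ⟨a, ha, hq⟩ := hq
    have := ih a ha
    simp only [List.mem_cons, List.not_mem_nil, or_false] at hq
    rcases hq with rfl | rfl <;> positivity

lemma CW_length (n : ℕ) : (CW n).length = 2 ^ n := by
  induction n with
  | zero => simp [CW]
  | succ n ih =>
    simp [CW, List.length_flatMap, ih, pow_succ]

open scoped Classical in
lemma count_lt (l : List ℚ) (hl : ∀ q ∈ l, 0 < q) (x : ℝ) (hx : x < 1) :
    (l.flatMap (fun x : ℚ => [x / (x + 1), x + 1])).countP (fun q : ℚ => decide (((q : ℚ) : ℝ) ≤ x))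
      = l.countP (fun q : ℚ => decide (((q : ℚ) : ℝ) ≤ x / (1 - x))) := by
  induction l with
  | nil => simp
  | cons a l ih =>
    have ha : 0 < a := hl a (by simp)
    have ha' : (0 : ℝ) < a := by exact_mod_cast ha
    have h1 : ((a / (a + 1) : ℚ) : ℝ) ≤ x ↔ (a : ℝ) ≤ x / (1 - x) := by
      push_cast
      rw [div_le_iff₀ (by linarith), le_div_iff₀ (by linarith)]
      constructor <;> intro h <;> linarith
    have h2 : ¬ (((a + 1 : ℚ) : ℝ) ≤ x) := by
      push_cast; linarith
    rw [List.flatMap_cons, List.countP_append, ih (fun q hq => hl q (by simp [hq]))]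
    simp only [List.countP_cons, List.countP_nil, h1, h2]
    simp
    ring

open scoped Classical in
lemma count_ge (l : List ℚ) (hl : ∀ q ∈ l, 0 < q) (x : ℝ) (hx : 1 ≤ x) :
    (l.flatMap (fun x : ℚ => [x / (x + 1), x + 1])).countP (fun q : ℚ => decide (((q : ℚ) : ℝ) ≤ x))
      = l.length + l.countP (fun q : ℚ => decide (((q : ℚ) : ℝ) ≤ x - 1)) := by
  induction l with
  | nil => simp
  | cons a l ih =>
    have ha : 0 < a := hl a (by simp)
    have ha' : (0 : ℝ) < a := by exact_mod_cast ha
    have h1 : ((a / (a + 1) : ℚ) : ℝ) ≤ x := by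
      push_cast
      rw [div_le_iff₀ (by linarith)]
      nlinarith
    have h2 : (((a + 1 : ℚ) : ℝ) ≤ x) ↔ (a : ℝ) ≤ x - 1 := by
      push_cast; constructor <;> intro h <;> linarith
    rw [List.flatMap_cons, List.countP_append, ih (fun q hq => hl q (by simp [hq]))]
    simp only [List.countP_cons, List.countP_nil, h1, h2, List.length_cons]
    simp
    ring

open scoped Classical in
lemma Fcw_eq (n : ℕ) (x : ℝ) :
    Fcw n x = ((CW n).countP (fun q : ℚ => decide ((q : ℝ) ≤ x)) : ℕ) / 2 ^ n := by
  have h : ∀ l : List ℚ, (l >>= fun a => (pure (a : ℝ) : List ℝ)) = l.map (fun q : ℚ => (q : ℝ)) := by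
    intro l
    induction l with
    | nil => rfl
    | cons a l ih => simpa using ih
  unfold Fcw
  rw [h, List.countP_map]
  rfl

lemma Fcw_lt (n : ℕ) (x : ℝ) (hx : x < 1) : Fcw (n + 1) x = Fcw n (x / (1 - x)) / 2 := by
  rw [Fcw_eq, Fcw_eq, CW, count_lt _ (CW_pos n) x hx, pow_succ]
  field_simp

lemma Fcw_ge (n : ℕ) (x : ℝ) (hx : 1 ≤ x) : Fcw (n + 1) x = (Fcw n (x - 1) + 1) / 2 := by
  rw [Fcw_eq, Fcw_eq, CW, count_ge _ (CW_pos n) x hx, pow_succ, CW_length]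
  push_cast
  field_simp
  ring

lemma Fcw_nonneg (n : ℕ) (x : ℝ) : 0 ≤ Fcw n x := by
  unfold Fcw; positivity

lemma Fcw_le_one (n : ℕ) (x : ℝ) : Fcw n x ≤ 1 := by
  rw [Fcw_eq, div_le_one (by positivity)]
  have := CW_length n
  rw [show (2 : ℝ) ^ n = ((2 ^ n : ℕ) : ℝ) by push_cast; rfl, ← this]
  exact_mod_cast List.countP_le_length

lemma Fcw_mono (n : ℕ) : Monotone (Fcw n) := by
  intro x y hxy
  rw [Fcw_eq, Fcw_eq]
  gcongr
  apply List.countP_mono_left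
  intro q _ h
  simp only [decide_eq_true_eq] at h ⊢
  exact h.trans hxy

lemma Fcw_zero (n : ℕ) : Fcw n 0 = 0 := by
  induction n with
  | zero => simp [Fcw, CW]
  | succ n ih => rw [Fcw_lt _ _ (by norm_num)]; simp [ih]

lemma Fcw_diff (n : ℕ) : ∀ x, |Fcw n x - Fcw (n + 1) x| ≤ 1 * (1 / 2) ^ n := by
  induction n with
  | zero =>
    intro x
    have := Fcw_nonneg 0 x
    have := Fcw_nonneg 1 x
    have := Fcw_le_one 0 x
    have := Fcw_le_one 1 x
    rw [abs_le]
    constructor <;> norm_num <;> linarith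
  | succ n ih =>
    intro x
    rcases lt_or_ge x 1 with hx | hx
    · rw [Fcw_lt _ _ hx, Fcw_lt _ _ hx, pow_succ]
      have := abs_le.1 (ih (x / (1 - x)))
      rw [abs_le]; constructor <;> linarith
    · rw [Fcw_ge _ _ hx, Fcw_ge _ _ hx, pow_succ]
      have := abs_le.1 (ih (x - 1))
      rw [abs_le]; constructor <;> linarith

lemma Fcw_lim (x : ℝ) : ∃ L, Tendsto (fun n => Fcw n x) atTop (nhds L) :=
  cauchySeq_tendsto_of_complete
    (cauchySeq_of_le_geometric (1 / 2) 1 (by norm_num) (fun n => by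
      rw [Real.dist_eq]; exact Fcw_diff n x))

theorem calkin_wilf_limit_distribution_exists :
    ∃ F : ℝ → ℝ, MonotoneOn F (Set.Ici 0) ∧ ContinuousOn F (Set.Ici 0) ∧
      F 0 = 0 ∧ Tendsto F atTop (nhds 1) ∧
      (∀ x : ℝ, 1 ≤ x → 2 * F x = F (x - 1) + 1) ∧
      (∀ x : ℝ, 0 < x → x < 1 → 2 * F x = F (x / (1 - x))) ∧
      (∀ n : ℕ, 1 ≤ n → ∀ x : ℝ, 0 ≤ x →
        |F x - Fcw (n - 1) x| ≤ 2 ^ (-(n : ℤ))) := by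
  choose F hF using Fcw_lim
  have hmono : Monotone F := fun x y hxy =>
    le_of_tendsto_of_tendsto' (hF x) (hF y) (fun n => Fcw_mono n hxy)
  have h0 : ∀ x, 0 ≤ F x := fun x => ge_of_tendsto' (hF x) (fun n => Fcw_nonneg n x)
  have h1 : ∀ x, F x ≤ 1 := fun x => le_of_tendsto' (hF x) (fun n => Fcw_le_one n x)
  have hz : F 0 = 0 := tendsto_nhds_unique (hF 0) (by simp [Fcw_zero])
  have hlt : ∀ x, x < 1 → F x = F (x / (1 - x)) / 2 := fun x hx =>
    tendsto_nhds_unique ((tendsto_add_atTop_iff_nat 1).2 (hF x))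
      (by simpa only [Fcw_lt _ x hx] using (hF (x / (1 - x))).div_const 2)
  have hge : ∀ x, 1 ≤ x → F x = (F (x - 1) + 1) / 2 := fun x hx =>
    tendsto_nhds_unique ((tendsto_add_atTop_iff_nat 1).2 (hF x))
      (by simpa only [Fcw_ge _ x hx] using ((hF (x - 1)).add_const 1).div_const 2)
  have hF1 : F 1 = 1 / 2 := by rw [hge 1 le_rfl]; simp [hz]
  have hnat : ∀ n : ℕ, F n = 1 - (1 / 2) ^ n := by
    intro n
    induction n with
    | zero => simp [hz]
    | succ n ih =>
      rw [hge _ (by push_cast; linarith [(Nat.cast_nonneg n : (0 : ℝ) ≤ n)])]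
      push_cast
      rw [add_sub_cancel_right, ih, pow_succ]; ring
  have hlarge : ∀ n : ℕ, ∀ x : ℝ, (n : ℝ) ≤ x → 1 - (1 / 2) ^ n ≤ F x := fun n x hx => by
    rw [← hnat]; exact hmono hx
  have htop : Tendsto F atTop (nhds 1) := by
    rw [Metric.tendsto_atTop]
    intro ε hε
    obtain ⟨n, hn⟩ := exists_pow_lt_of_lt_one hε (by norm_num : (1 / 2 : ℝ) < 1)
    refine ⟨n, fun x hx => ?_⟩
    rw [Real.dist_eq, abs_lt]
    constructor <;> linarith [hlarge n x hx, h1 x]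
  have key : ∀ n : ℕ, ∀ x, ∀ᶠ y in nhds x, |F y - F x| ≤ (1 / 2) ^ n := by
    intro n
    induction n with
    | zero =>
      intro x
      refine Eventually.of_forall fun y => ?_
      rw [abs_le]
      constructor <;> norm_num <;> linarith [h0 x, h0 y, h1 x, h1 y]
    | succ n ih =>
      intro x
      have hsub : Tendsto (fun y : ℝ => y - 1) (nhds x) (nhds (x - 1)) :=
        tendsto_id.sub_const 1
      have eA := hsub.eventually (ih (x - 1))
      rcases lt_trichotomy x 1 with hx | hx | hx
      · have hc : Tendsto (fun y : ℝ => y / (1 - y)) (nhds x) (nhds (x / (1 - x))) :=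
          tendsto_id.div (tendsto_const_nhds.sub tendsto_id) (by simp; linarith)
        filter_upwards [hc.eventually (ih _), eventually_lt_nhds hx] with y hy hy1
        rw [hlt y hy1, hlt x hx, pow_succ]
        rw [abs_le] at hy ⊢
        constructor <;> linarith
      · subst hx
        have hN : (n : ℝ) / (n + 1) < 1 := by
          rw [div_lt_one (by positivity)]; linarith
        filter_upwards [eA, eventually_gt_nhds hN] with y hy hy1
        rcases lt_or_ge y 1 with h | h
        · have : (n : ℝ) ≤ y / (1 - y) := by
            rw [div_lt_iff₀ (by positivity)] at hy1
            rw [le_div_iff₀ (by linarith)]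
            linarith
          rw [hlt y h, hF1, pow_succ, abs_le]
          have := hlarge n _ this
          have := h1 (y / (1 - y))
          have : (0 : ℝ) < (1 / 2) ^ n := by positivity
          constructor <;> linarith
        · rw [hge y h, hge 1 le_rfl, pow_succ]
          rw [abs_le] at hy ⊢
          constructor <;> linarith
      · filter_upwards [eA, eventually_gt_nhds hx] with y hy hy1
        rw [hge y hy1.le, hge x hx.le, pow_succ]
        rw [abs_le] at hy ⊢
        constructor <;> linarith
  have hcont : Continuous F := by
    rw [continuous_iff_continuousAt]
    intro x
    rw [ContinuousAt, Metric.tendsto_nhds]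
    intro ε hε
    obtain ⟨n, hn⟩ := exists_pow_lt_of_lt_one hε (by norm_num : (1 / 2 : ℝ) < 1)
    filter_upwards [key n x] with y hy
    rw [Real.dist_eq]
    exact hy.trans_lt hn
  have hbound : ∀ n : ℕ, ∀ x, |F x - Fcw n x| ≤ (1 / 2) ^ (n + 1) := by
    intro n
    induction n with
    | zero =>
      intro x
      rcases lt_or_ge x 1 with hx | hx
      · have : Fcw 0 x = 0 := by simp [Fcw, CW, hx]
        rw [this, abs_le]
        have := hmono hx.le
        constructor <;> norm_num <;> linarith [h0 x]
      · have : Fcw 0 x = 1 := by simp [Fcw, CW, hx]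
        rw [this, abs_le]
        have := hmono hx
        constructor <;> norm_num <;> linarith [h1 x]
    | succ n ih =>
      intro x
      rw [pow_succ]
      rcases lt_or_ge x 1 with hx | hx
      · rw [Fcw_lt _ _ hx, hlt x hx]
        have := abs_le.1 (ih (x / (1 - x)))
        rw [abs_le]; constructor <;> linarith
      · rw [Fcw_ge _ _ hx, hge x hx]
        have := abs_le.1 (ih (x - 1))
        rw [abs_le]; constructor <;> linarith
  refine ⟨F, hmono.monotoneOn _, hcont.continuousOn, hz, htop, fun x hx => ?_,
    fun x _ hx => ?_, fun n hn x _ => ?_⟩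
  · rw [hge x hx]; ring
  · rw [hlt x hx]; ring
  · have := hbound (n - 1) x
    rw [Nat.sub_add_cancel hn] at this
    simpa [zpow_neg] using this
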